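/- For every convex body K ⊂ ℝ², one has 𝔼 U_{K,3}² ≤ 1/72, with equality when K is a triangle. Equivalently, the isotropic constant L_K, given by L_K² = (2! 𝔼 U_{K,3}²/3)^{1/2} for K ⊂ ℝ² with centroid at the origin, satisfies L_K ≤ L_Δ = 108^{-1/4}, where Δ is a triangle with centroid at the origin. -/

import Mathlib

open MeasureTheory Set

noncomputable section

variable {E : Type*} [NormedAddCommGroup E] [InnerProductSpace ℝ E]

/-- A symmetric convex body: a compact convex set with nonempty interior with `K = -K`. -/
def IsSymConvexBody (K : Set E) : Prop :=
  IsCompact K ∧ Convex ℝ K ∧ (interior K).Nonempty ∧ K = -K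

/-- `momentU n N K p = 𝔼 U_{K,N}^p`, the `p`-th moment of the normalized volume of the
convex hull of `N` independent uniform random points in `K ⊆ ℝⁿ`. -/
def momentU (n N : ℕ) (K : Set (EuclideanSpace ℝ (Fin n))) (p : ℝ) : ℝ :=
  (∫ x : Fin N → EuclideanSpace ℝ (Fin n) in {x | ∀ i, x i ∈ K},
      ((volume (convexHull ℝ (Set.range x))).toReal / (volume K).toReal) ^ p) /
    (volume K).toReal ^ N

/-- `momentV n N K p = 𝔼 V_{K,N}^p`, the `p`-th moment of the normalized volume of the
symmetric convex hull `conv{±x₁, …, ±x_N}` of `N` independent uniform random points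
in `K ⊆ ℝⁿ`. -/
def momentV (n N : ℕ) (K : Set (EuclideanSpace ℝ (Fin n))) (p : ℝ) : ℝ :=
  (∫ x : Fin N → EuclideanSpace ℝ (Fin n) in {x | ∀ i, x i ∈ K},
      ((volume (convexHull ℝ (Set.range x ∪ -Set.range x))).toReal / (volume K).toReal) ^ p) /
    (volume K).toReal ^ N

/-- A convex body: a compact convex set with nonempty interior. -/
def IsConvexBody (K : Set E) : Prop :=
  IsCompact K ∧ Convex ℝ K ∧ (interior K).Nonempty

abbrev E2 := EuclideanSpace ℝ (Fin 2)

def crs (a b : E2) : ℝ := a 0 * b 1 - a 1 * b 0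

def Dt (x : Fin 3 → E2) : ℝ := crs (x 1 - x 0) (x 2 - x 0)

def cube (K : Set E2) : Set (Fin 3 → E2) := {x | ∀ i, x i ∈ K}

def Jf (K : Set E2) : ℝ := ∫ x in cube K, (Dt x / 2) ^ 2

def Good (K : Set E2) : Prop := Jf K ≤ (volume K).toReal ^ 5 / 72

lemma cube_eq (K : Set E2) : cube K = Set.univ.pi (fun _ => K) := by
  ext x; simp [cube]

lemma cont_Dt : Continuous Dt := by
  unfold Dt crs
  fun_prop

lemma cube_compact {K : Set E2} (hK : IsCompact K) : IsCompact (cube K) := by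
  rw [cube_eq]; exact isCompact_univ_pi (fun _ => hK)

lemma cube_mono {K L : Set E2} (h : K ⊆ L) : cube K ⊆ cube L := fun _ hx i => h (hx i)

lemma cube_vol (K : Set E2) : volume (cube K) = volume K ^ 3 := by
  rw [cube_eq, volume_pi, Measure.pi_pi]; simp

lemma intOn {K : Set E2} (hK : IsCompact K) {G : (Fin 3 → E2) → ℝ} (hG : Continuous G) :
    IntegrableOn G (cube K) :=
  hG.continuousOn.integrableOn_compact (cube_compact hK)

lemma cont_DtSq : Continuous (fun x : Fin 3 → E2 => (Dt x / 2) ^ 2) := by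
  have := cont_Dt; fun_prop

lemma change_var (F : E2 → E2) (hF : Continuous F) (hi : Function.Injective F) (c : NNReal)
    (hm : Measure.map F volume = c • volume) (G : (Fin 3 → E2) → ℝ) (K : Set E2) :
    (c : ℝ) ^ 3 * ∫ x in cube (F '' K), G x = ∫ x in cube K, G (fun i => F (x i)) := by
  have he : MeasurableEmbedding (fun (x : Fin 3 → E2) (i : Fin 3) => F (x i)) := by
    apply Continuous.measurableEmbedding
    · fun_prop
    · intro x y h
      funext i
      exact hi (congrFun h i)
  have hs : SigmaFinite (Measure.map F volume) := by rw [hm]; infer_instance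
  have h1 : Measure.map (fun (x : Fin 3 → E2) (i : Fin 3) => F (x i)) volume = (c ^ 3) • volume := by
    rw [volume_pi, Measure.pi_map_pi (fun _ => hF.measurable.aemeasurable)]
    apply Measure.pi_eq
    intro s hs'
    rw [Measure.smul_apply, Measure.pi_pi]
    simp only [hm, Measure.smul_apply, Fin.prod_univ_three, ENNReal.smul_def, smul_eq_mul,
      ENNReal.coe_pow]
    ring
  have h2 := he.setIntegral_map (μ := volume) G (cube (F '' K))
  have h3 : (fun (x : Fin 3 → E2) (i : Fin 3) => F (x i)) ⁻¹' (cube (F '' K)) = cube K := by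
    ext x
    simp [cube, hi.eq_iff]
  rw [h3, h1, Measure.restrict_smul, integral_smul_nnreal_measure] at h2
  rw [← h2]
  simp [NNReal.smul_def]

def linM (a b : E2) : E2 →ₗ[ℝ] E2 :=
  Matrix.toLin (EuclideanSpace.basisFun (Fin 2) ℝ).toBasis (EuclideanSpace.basisFun (Fin 2) ℝ).toBasis
    !![a 0, b 0; a 1, b 1]

lemma linM_det (a b : E2) : LinearMap.det (linM a b) = crs a b := by
  rw [linM, LinearMap.det_toLin, Matrix.det_fin_two_of]; unfold crs; ring

lemma linM_apply (a b x : E2) : linM a b x = x 0 • a + x 1 • b := by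
  have h : x = x 0 • (EuclideanSpace.basisFun (Fin 2) ℝ).toBasis 0
      + x 1 • (EuclideanSpace.basisFun (Fin 2) ℝ).toBasis 1 := by
    ext i; fin_cases i <;> simp
  conv_lhs => rw [h]
  rw [map_add, map_smul, map_smul, linM, Matrix.toLin_self, Matrix.toLin_self]
  congr 2 <;> (ext i; fin_cases i <;> simp)

def aff (p a b : E2) : E2 →ᵃ[ℝ] E2 := (linM a b).toAffineMap + AffineMap.const ℝ E2 p

lemma aff_apply (p a b x : E2) : aff p a b x = x 0 • a + x 1 • b + p := by
  simp [aff, linM_apply]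

lemma aff_cont (p a b : E2) : Continuous (aff p a b) := by
  have : (aff p a b : E2 → E2) = fun x => x 0 • a + x 1 • b + p := by
    funext x; exact aff_apply p a b x
  rw [this]; fun_prop

lemma aff_vol (p a b : E2) (s : Set E2) :
    volume (aff p a b '' s) = ENNReal.ofReal |crs a b| * volume s := by
  rw [← linM_det, ← Measure.addHaar_image_linearMap]
  have : aff p a b '' s = (fun x => x + p) '' (linM a b '' s) := by
    rw [← image_comp]; congr 1
  rw [this]
  simp

lemma aff_Dt (p a b : E2) (x : Fin 3 → E2) :
    Dt (fun i => aff p a b (x i)) = crs a b * Dt x := by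
  simp only [Dt, crs, aff_apply, PiLp.add_apply, PiLp.sub_apply, PiLp.smul_apply, smul_eq_mul]
  ring

lemma aff_surj (p a b : E2) (h : crs a b ≠ 0) (y : E2) :
    aff p a b (!₂[crs (y - p) b / crs a b, crs a (y - p) / crs a b]) = y := by
  rw [aff_apply]
  have key : ∀ i : Fin 2, crs (y - p) b * a i + crs a (y - p) * b i = crs a b * (y i - p i) := by
    intro i
    fin_cases i <;> simp [crs] <;> ring
  ext i
  have := key i
  simp only [PiLp.add_apply, PiLp.smul_apply, smul_eq_mul, Matrix.cons_val_zero, Matrix.cons_val_one]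
  field_simp
  linarith

lemma aff_inj (p a b : E2) (h : crs a b ≠ 0) : Function.Injective (aff p a b) := by
  intro x y hxy
  simp only [aff_apply] at hxy
  have h0 := congrArg (fun z : E2 => z 0) hxy
  have h1 := congrArg (fun z : E2 => z 1) hxy
  simp only [PiLp.add_apply, PiLp.smul_apply, smul_eq_mul] at h0 h1
  unfold crs at h
  ext i
  fin_cases i
  · simp only [Fin.zero_eta]
    apply mul_left_cancel₀ h
    linear_combination b 1 * h0 - b 0 * h1
  · simp only [Fin.mk_one]
    apply mul_left_cancel₀ h
    linear_combination a 0 * h1 - a 1 * h0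

lemma aff_map (p a b : E2) (h : crs a b ≠ 0) :
    Measure.map (aff p a b) volume = (Real.nnabs (crs a b))⁻¹ • volume := by
  have h1 := Measure.map_linearMap_addHaar_eq_smul_addHaar (volume : Measure E2) (f := linM a b)
    (by rwa [linM_det])
  have h2 : (aff p a b : E2 → E2) = (fun x => x + p) ∘ (linM a b) := by
    funext x; simp [aff]
  have hl : Measurable (linM a b) := (LinearMap.continuous_of_finiteDimensional _).measurable
  rw [h2, ← Measure.map_map (by fun_prop) hl, h1, Measure.map_smul, map_add_right_eq_self, linM_det,
    ENNReal.ofReal]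
  change ((|(crs a b)⁻¹|.toNNReal : NNReal) : ENNReal) • volume = (((Real.nnabs (crs a b))⁻¹ : NNReal) : ENNReal) • (volume : Measure E2)
  congr 2
  ext
  simp

lemma aff_J (p a b : E2) (h : crs a b ≠ 0) (K : Set E2) :
    Jf (aff p a b '' K) = |crs a b| ^ 5 * Jf K := by
  have := change_var (aff p a b) (aff_cont p a b) (aff_inj p a b h) _ (aff_map p a b h)
    (fun x => (Dt x / 2) ^ 2) K
  simp only [aff_Dt] at this
  have h2 : ∀ x : Fin 3 → E2, (crs a b * Dt x / 2) ^ 2 = |crs a b| ^ 2 * (Dt x / 2) ^ 2 := by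
    intro x; rw [sq_abs]; ring
  simp only [h2, integral_const_mul] at this
  have h3 : |crs a b| ≠ 0 := by simpa using h
  unfold Jf
  simp only [NNReal.coe_inv, Real.coe_nnabs] at this
  rw [inv_pow, inv_mul_eq_iff_eq_mul₀ (pow_ne_zero _ h3)] at this
  rw [this]; ring

lemma aff_volR (p a b : E2) (K : Set E2) :
    (volume (aff p a b '' K)).toReal = |crs a b| * (volume K).toReal := by
  rw [aff_vol, ENNReal.toReal_mul, ENNReal.toReal_ofReal (abs_nonneg _)]

lemma aff_Good (p a b : E2) (h : crs a b ≠ 0) {K : Set E2} (hK : Good K) :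
    Good (aff p a b '' K) := by
  unfold Good at *
  rw [aff_J p a b h, aff_volR, mul_pow, mul_div_assoc]
  gcongr

def T0 : Set E2 := {x | 0 ≤ x 0 ∧ 0 ≤ x 1 ∧ x 0 + x 1 ≤ 1}

def e0 : E2 := !₂[1, 0]
def e1 : E2 := !₂[0, 1]

@[simp] lemma e0_0 : e0 0 = 1 := by simp [e0]
@[simp] lemma e0_1 : e0 1 = 0 := by simp [e0]
@[simp] lemma e1_0 : e1 0 = 0 := by simp [e1]
@[simp] lemma e1_1 : e1 1 = 1 := by simp [e1]

lemma T0_convex : Convex ℝ T0 := by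
  intro x hx y hy a b ha hb hab
  obtain ⟨h1, h2, h3⟩ := hx
  obtain ⟨h4, h5, h6⟩ := hy
  refine ⟨?_, ?_, ?_⟩ <;> simp only [PiLp.add_apply, PiLp.smul_apply, smul_eq_mul]
  · positivity
  · positivity
  · nlinarith

lemma T0_hull : convexHull ℝ {0, e0, e1} = T0 := by
  apply Subset.antisymm
  · apply convexHull_min _ T0_convex
    rintro x (rfl | rfl | rfl) <;> simp [T0]
  · rintro x ⟨h1, h2, h3⟩
    have hx : x = (1 - x 0 - x 1) • (0 : E2) + x 0 • e0 + x 1 • e1 := by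
      ext i; fin_cases i <;> simp
    rw [hx]
    have hc := convex_convexHull ℝ ({0, e0, e1} : Set E2)
    have m0 : (0 : E2) ∈ convexHull ℝ ({0, e0, e1} : Set E2) := subset_convexHull _ _ (by simp)
    have m1 : e0 ∈ convexHull ℝ ({0, e0, e1} : Set E2) := subset_convexHull _ _ (by simp)
    have m2 : e1 ∈ convexHull ℝ ({0, e0, e1} : Set E2) := subset_convexHull _ _ (by simp)
    have := hc.sum_mem (t := Finset.univ) (w := ![1 - x 0 - x 1, x 0, x 1]) (z := ![0, e0, e1])
      (by intro i _; fin_cases i <;> simp <;> linarith) (by simp [Fin.sum_univ_three]; ring)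
      (by intro i _; fin_cases i <;> simp [m0, m1, m2])
    simpa [Fin.sum_univ_three] using this

lemma T0_compact : IsCompact T0 := by
  rw [← T0_hull]; exact (Set.toFinite _).isCompact_convexHull ℝ

lemma aff_tri (p a b : E2) : aff p a b '' T0 = convexHull ℝ {p, p + a, p + b} := by
  rw [← T0_hull, AffineMap.image_convexHull]
  congr 1
  simp [image_insert_eq, aff_apply, add_comm]

lemma T0_int (f : E2 → ℝ) (hf : Continuous f) :
    ∫ x in T0, f x = ∫ s in (0:ℝ)..1, ∫ t in (0:ℝ)..(1 - s), f !₂[s, t] := by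
  have e1 := (PiLp.volume_preserving_ofLp (Fin 2))
  have e2 := volume_preserving_finTwoArrow ℝ
  have e3 : MeasurePreserving (fun x : E2 => (x 0, x 1)) volume volume := e2.comp e1
  have hemb : MeasurableEmbedding (fun x : E2 => (x 0, x 1)) := by
    apply Continuous.measurableEmbedding
    · fun_prop
    · intro x y h
      simp only [Prod.mk.injEq] at h
      ext i; fin_cases i
      · exact h.1
      · exact h.2
  let R : Set (ℝ × ℝ) := {z | 0 ≤ z.1 ∧ 0 ≤ z.2 ∧ z.1 + z.2 ≤ 1}
  have hR : (fun x : E2 => (x 0, x 1)) ⁻¹' R = T0 := rfl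
  have h1 := e3.setIntegral_preimage_emb hemb (fun z => f !₂[z.1, z.2]) R
  rw [hR] at h1
  have h2 : ∀ x : E2, !₂[x 0, x 1] = x := by
    intro x; ext i; fin_cases i <;> simp
  simp only [h2] at h1
  rw [h1]
  have hRc : IsCompact R := by
    have : R = (fun x : E2 => (x 0, x 1)) '' T0 := by
      ext z; constructor
      · intro hz; exact ⟨!₂[z.1, z.2], by simpa [T0, R] using hz, by simp⟩
      · rintro ⟨x, hx, rfl⟩; exact hx
    rw [this]; exact T0_compact.image (by fun_prop)
  have hRm : MeasurableSet R := hRc.measurableSet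
  have hg : Continuous (fun z : ℝ × ℝ => f !₂[z.1, z.2]) := by fun_prop
  have hint : IntegrableOn (fun z : ℝ × ℝ => f !₂[z.1, z.2]) R :=
    hg.continuousOn.integrableOn_compact hRc
  rw [← integral_indicator hRm, Measure.volume_eq_prod, integral_prod]
  swap
  · rw [← Measure.volume_eq_prod]; exact hint.integrable_indicator hRm
  rw [intervalIntegral.integral_of_le zero_le_one, ← integral_Icc_eq_integral_Ioc,
    ← integral_indicator measurableSet_Icc]
  congr 1
  funext s
  by_cases hs : s ∈ Icc (0:ℝ) 1
  · rw [indicator_of_mem hs, intervalIntegral.integral_of_le (by linarith [hs.2]),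
      ← integral_Icc_eq_integral_Ioc, ← integral_indicator measurableSet_Icc]
    congr 1
    funext t
    by_cases ht : t ∈ Icc (0:ℝ) (1 - s)
    · rw [indicator_of_mem ht, indicator_of_mem]
      exact ⟨hs.1, ht.1, by simp only; linarith [ht.2]⟩
    · rw [indicator_of_notMem ht, indicator_of_notMem]
      rintro ⟨_, h5, h6⟩
      exact ht ⟨h5, by simp only at h6; linarith⟩
  · rw [indicator_of_notMem hs]
    have : ∀ t, R.indicator (fun z : ℝ × ℝ => f !₂[z.1, z.2]) (s, t) = 0 := by
      intro t
      rw [indicator_of_notMem]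
      rintro ⟨h4, h5, h6⟩
      simp only at h4 h5 h6
      exact hs ⟨h4, by linarith⟩
    simp [this]

def av (x : E2) : Fin 3 → ℝ := ![1, x 0, x 1]

lemma av_cont (i : Fin 3) : Continuous (fun x => av x i) := by
  fin_cases i <;> simp [av] <;> fun_prop

def MM (i j : Fin 3) : ℝ := ∫ x in T0, av x i * av x j

lemma poly_int (c0 c1 c2 c3 : ℝ) (g : ℝ → ℝ)
    (hg : ∀ s, g s = c0 + c1 * s + c2 * s ^ 2 + c3 * s ^ 3) :
    ∫ s in (0:ℝ)..1, g s = c0 + c1 / 2 + c2 / 3 + c3 / 4 := by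
  have hg' : g = fun s => c0 + c1 * s + c2 * s ^ 2 + c3 * s ^ 3 := funext hg
  have h1 : ∀ s : ℝ, HasDerivAt (fun s : ℝ => c0 * s + c1 * (s ^ 2 / 2) + c2 * (s ^ 3 / 3) + c3 * (s ^ 4 / 4))
      (g s) s := by
    intro s
    have a1 := (hasDerivAt_id s).const_mul c0
    have a2 := ((hasDerivAt_pow 2 s).div_const 2).const_mul c1
    have a3 := ((hasDerivAt_pow 3 s).div_const 3).const_mul c2
    have a4 := ((hasDerivAt_pow 4 s).div_const 4).const_mul c3
    refine (((a1.add a2).add a3).add a4).congr_deriv ?_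
    rw [hg]
    norm_num
  rw [intervalIntegral.integral_eq_sub_of_hasDerivAt (fun s _ => h1 s)
    ((by rw [hg']; fun_prop : Continuous g).intervalIntegrable _ _)]
  ring

lemma MM_val : ∀ i j, MM i j =
    !![1/2, 1/6, 1/6; 1/6, 1/12, 1/24; 1/6, 1/24, 1/12] i j := by
  have key : ∀ i j, MM i j = ∫ s in (0:ℝ)..1, ∫ t in (0:ℝ)..(1 - s),
      (![1, s, t] : Fin 3 → ℝ) i * (![1, s, t] : Fin 3 → ℝ) j := by
    intro i j
    rw [MM, T0_int (fun x => av x i * av x j) ((av_cont i).mul (av_cont j))]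
    simp [av]
  intro i j
  rw [key]
  fin_cases i <;> fin_cases j
  · rw [poly_int 1 (-1) 0 0]
    · norm_num
    · intro s; simp; ring
  · rw [poly_int 0 1 (-1) 0]
    · norm_num
    · intro s; simp; ring
  · rw [poly_int (1/2) (-1) (1/2) 0]
    · norm_num
    · intro s; simp; ring
  · rw [poly_int 0 1 (-1) 0]
    · norm_num
    · intro s; simp; ring
  · rw [poly_int 0 0 1 (-1)]
    · norm_num
    · intro s; simp; ring
  · rw [poly_int 0 (1/2) (-1) (1/2)]
    · norm_num
    · intro s
      have : ∫ t in (0:ℝ)..(1 - s), s * t = s * ∫ t in (0:ℝ)..(1 - s), t :=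
        intervalIntegral.integral_const_mul _ _
      simp [this]; ring
  · rw [poly_int (1/2) (-1) (1/2) 0]
    · norm_num
    · intro s; simp; ring
  · rw [poly_int 0 (1/2) (-1) (1/2)]
    · norm_num
    · intro s; simp; ring
  · rw [poly_int (1/3) (-1) 1 (-1/3)]
    · norm_num
    · intro s; simp [← pow_two]; ring

lemma T0_vol : (volume T0).toReal = 1 / 2 := by
  have h := MM_val 0 0
  simp only [MM, av] at h
  simpa [Measure.real] using h

lemma T0_J : Jf T0 = 1 / 2304 := by
  have hD : ∀ x : Fin 3 → E2, (Dt x / 2) ^ 2 = ∑ σ : Equiv.Perm (Fin 3), ∑ τ : Equiv.Perm (Fin 3),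
      (1 / 4 * ((Equiv.Perm.sign σ : ℤ) : ℝ) * ((Equiv.Perm.sign τ : ℤ) : ℝ)) *
        ∏ i, (av (x i) (σ i) * av (x i) (τ i)) := by
    intro x
    have h1 : Dt x = (Matrix.of fun j i => av (x i) j).det := by
      rw [Matrix.det_fin_three]; simp [Dt, crs, av]; ring
    rw [h1, div_pow, Matrix.det_apply', sq, Finset.sum_mul_sum, Finset.sum_div]
    refine Finset.sum_congr rfl fun σ _ => ?_
    rw [Finset.sum_div]
    refine Finset.sum_congr rfl fun τ _ => ?_
    rw [Finset.prod_mul_distrib]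
    simp only [Matrix.of_apply]
    ring
  have hi : ∀ σ τ : Equiv.Perm (Fin 3), Continuous (fun x : Fin 3 → E2 =>
      (1 / 4 * ((Equiv.Perm.sign σ : ℤ) : ℝ) * ((Equiv.Perm.sign τ : ℤ) : ℝ)) *
        ∏ i, (av (x i) (σ i) * av (x i) (τ i))) := by
    intro σ τ
    refine continuous_const.mul (continuous_finsetProd _ fun i _ => ?_)
    exact ((av_cont (σ i)).comp (continuous_apply i)).mul ((av_cont (τ i)).comp (continuous_apply i))
  unfold Jf
  simp only [hD]
  rw [integral_finsetSum _ (fun σ _ => integrable_finsetSum _ (fun τ _ => intOn T0_compact (hi σ τ)))]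
  have h2 : ∀ σ : Equiv.Perm (Fin 3), (∫ x in cube T0, ∑ τ : Equiv.Perm (Fin 3),
      (1 / 4 * ((Equiv.Perm.sign σ : ℤ) : ℝ) * ((Equiv.Perm.sign τ : ℤ) : ℝ)) *
        ∏ i, (av (x i) (σ i) * av (x i) (τ i))) = 1 / 4 * (Matrix.of MM).det := by
    intro σ
    rw [integral_finsetSum _ (fun τ _ => intOn T0_compact (hi σ τ))]
    have h3 : ∀ τ : Equiv.Perm (Fin 3), (∫ x in cube T0, ∏ i, (av (x i) (σ i) * av (x i) (τ i)))
        = ∏ i, MM (σ i) (τ i) := by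
      intro τ
      rw [cube_eq, volume_pi, Measure.restrict_pi_pi]
      exact integral_fintype_prod_eq_prod (fun i (y : E2) => av y (σ i) * av y (τ i))
    simp only [integral_const_mul, h3]
    have h4 := Matrix.det_permute σ (Matrix.of MM)
    rw [← Matrix.det_transpose, Matrix.det_apply'] at h4
    simp only [Matrix.transpose_apply, Matrix.submatrix_apply, Matrix.of_apply, id] at h4
    simp only [mul_assoc]
    rw [← Finset.mul_sum, ← Finset.mul_sum, h4]
    have h5 : ((Equiv.Perm.sign σ : ℤ) : ℝ) * ((Equiv.Perm.sign σ : ℤ) : ℝ) = 1 := by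
      rw [← Int.cast_mul, ← Units.val_mul, Int.units_mul_self]; simp
    linear_combination (1 / 4) * (Matrix.of MM).det * h5
  rw [Finset.sum_congr rfl (fun σ _ => h2 σ), Finset.sum_const, Finset.card_univ, Fintype.card_perm,
    Matrix.det_fin_three]
  simp only [Matrix.of_apply, MM_val]
  simp [Nat.factorial]
  norm_num

lemma T0_eq : Jf T0 = (volume T0).toReal ^ 5 / 72 := by
  rw [T0_J, T0_vol]; norm_num

lemma tri_vol (x : Fin 3 → E2) : (volume (convexHull ℝ (Set.range x))).toReal = |Dt x| / 2 := by
  have h : Set.range x = {x 0, x 0 + (x 1 - x 0), x 0 + (x 2 - x 0)} := by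
    ext y; simp [Fin.exists_fin_succ, eq_comm]
  rw [h, ← aff_tri, aff_volR, T0_vol, Dt]; ring

lemma momentU_eq (K : Set E2) : momentU 2 3 K 2 = Jf K / (volume K).toReal ^ 5 := by
  unfold momentU Jf cube
  have : ∀ x : Fin 3 → E2, ((volume (convexHull ℝ (Set.range x))).toReal / (volume K).toReal) ^ (2:ℝ)
      = (Dt x / 2) ^ 2 / (volume K).toReal ^ 2 := by
    intro x
    rw [tri_vol, Real.rpow_two, div_pow, div_pow, div_pow, sq_abs]
  simp only [this]
  rw [integral_div, div_div]
  congr 1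
  ring

lemma tri_eq (a b c : E2) (h : AffineIndependent ℝ ![a, b, c]) :
    momentU 2 3 (convexHull ℝ {a, b, c}) 2 = 1 / 72 := by
  have hc : crs (b - a) (c - a) ≠ 0 := by
    intro h0
    rw [affineIndependent_iff_not_collinear_set] at h
    apply h
    rw [collinear_iff_of_mem (p₀ := a) (by simp)]
    by_cases hba : b = a
    · refine ⟨c - a, ?_⟩
      rintro p (rfl | rfl | rfl)
      · exact ⟨0, by simp⟩
      · exact ⟨0, by simp [hba]⟩
      · exact ⟨1, by simp⟩
    · have hn : (b 0 - a 0) ^ 2 + (b 1 - a 1) ^ 2 ≠ 0 := by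
        intro hz
        apply hba
        have z0 : b 0 - a 0 = 0 := by nlinarith [sq_nonneg (b 0 - a 0), sq_nonneg (b 1 - a 1)]
        have z1 : b 1 - a 1 = 0 := by nlinarith [sq_nonneg (b 0 - a 0), sq_nonneg (b 1 - a 1)]
        ext i; fin_cases i
        · simp only [Fin.zero_eta]; linarith
        · simp only [Fin.mk_one]; linarith
      refine ⟨b - a, ?_⟩
      rintro p (rfl | rfl | rfl)
      · exact ⟨0, by simp⟩
      · exact ⟨1, by simp⟩
      · refine ⟨((p 0 - a 0) * (b 0 - a 0) + (p 1 - a 1) * (b 1 - a 1)) /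
          ((b 0 - a 0) ^ 2 + (b 1 - a 1) ^ 2), ?_⟩
        simp only [crs, PiLp.sub_apply] at h0
        ext i; fin_cases i
        · simp
          field_simp
          linear_combination (- (b 1 - a 1)) * h0
        · simp
          field_simp
          linear_combination (b 0 - a 0) * h0
  have h1 : convexHull ℝ {a, b, c} = aff a (b - a) (c - a) '' T0 := by
    rw [aff_tri]; simp
  rw [momentU_eq, h1, aff_J _ _ _ hc, aff_volR, T0_eq, T0_vol]
  have : |crs (b - a) (c - a)| ≠ 0 := by simpa using hc
  field_simp

def ll (x : E2) : ℝ := max (1 - x 0 - x 1) 0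

def sh (t : ℝ) (x : E2) : E2 := x + (t * ll x) • !₂[1, -1]

lemma sh_0 (t : ℝ) (x : E2) : sh t x 0 = x 0 + t * ll x := by simp [sh]
lemma sh_1 (t : ℝ) (x : E2) : sh t x 1 = x 1 - t * ll x := by simp [sh]; ring

lemma sh_ll (t : ℝ) (x : E2) : ll (sh t x) = ll x := by
  unfold ll; rw [sh_0, sh_1]; congr 1; ring

lemma sh_sh (s t : ℝ) (x : E2) : sh s (sh t x) = sh (s + t) x := by
  ext i; fin_cases i
  · simp only [Fin.zero_eta, sh_0, sh_ll]; ring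
  · simp only [Fin.mk_one, sh_1, sh_ll]; ring

lemma sh_zero (x : E2) : sh 0 x = x := by simp [sh]

lemma sh_cont (t : ℝ) : Continuous (sh t) := by
  unfold sh ll; fun_prop

lemma sh_inj (t : ℝ) : Function.Injective (sh t) := by
  intro x y h
  have := congrArg (sh (-t)) h
  simpa [sh_sh, sh_zero] using this

lemma sh_map (t : ℝ) : Measure.map (sh t) volume = (1 : NNReal) • (volume : Measure E2) := by
  rw [one_smul]
  ext A hA
  rw [Measure.map_apply (sh_cont t).measurable hA]
  let H : Set E2 := {x | 0 ≤ 1 - x 0 - x 1}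
  have hH : MeasurableSet H := by
    apply IsClosed.measurableSet
    exact isClosed_le continuous_const (by fun_prop)
  let L := aff !₂[t, -t] !₂[1 - t, t] !₂[-t, 1 + t]
  have hcr : crs !₂[1 - t, t] !₂[-t, 1 + t] = 1 := by simp [crs]; ring
  have hL0 : ∀ x, L x 0 = x 0 + t * (1 - x 0 - x 1) := by
    intro x; simp only [L, aff_apply]; simp; ring
  have hL1 : ∀ x, L x 1 = x 1 - t * (1 - x 0 - x 1) := by
    intro x; simp only [L, aff_apply]; simp; ring
  have hLm : Measure.map L volume = volume := by
    have := aff_map !₂[t, -t] !₂[1 - t, t] !₂[-t, 1 + t] (by rw [hcr]; norm_num)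
    rw [hcr] at this
    simpa using this
  have hsL : ∀ x ∈ H, sh t x = L x := by
    intro x hx
    have hl : ll x = 1 - x 0 - x 1 := max_eq_left hx
    ext i; fin_cases i
    · simp only [Fin.zero_eta, sh_0, hL0, hl]
    · simp only [Fin.mk_one, sh_1, hL1, hl]
  have hLH : ∀ x, L x ∈ H ↔ x ∈ H := by
    intro x
    simp only [H, mem_ofPred_eq, hL0, hL1]
    constructor <;> intro h <;> linarith
  have hsR : ∀ x ∉ H, sh t x = x := by
    intro x hx
    have hl : ll x = 0 := max_eq_right (le_of_lt (not_le.mp hx))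
    simp [sh, hl]
  have a1 : sh t ⁻¹' A ∩ H = L ⁻¹' (A ∩ H) := by
    ext x
    simp only [mem_inter_iff, mem_preimage, hLH]
    constructor
    · rintro ⟨h1, h2⟩; exact ⟨hsL x h2 ▸ h1, h2⟩
    · rintro ⟨h1, h2⟩; exact ⟨(hsL x h2).symm ▸ h1, h2⟩
  have a2 : sh t ⁻¹' A \ H = A \ H := by
    ext x
    simp only [mem_sdiff, mem_preimage]
    constructor
    · rintro ⟨h1, h2⟩; exact ⟨hsR x h2 ▸ h1, h2⟩
    · rintro ⟨h1, h2⟩; exact ⟨(hsR x h2).symm ▸ h1, h2⟩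
  rw [← measure_inter_add_sdiff (sh t ⁻¹' A) hH, a1, a2, ← measure_inter_add_sdiff A hH]
  congr 1
  conv_rhs => rw [← hLm]
  rw [Measure.map_apply (aff_cont _ _ _).measurable (hA.inter hH)]

lemma sh_vol (t : ℝ) {K : Set E2} (hK : IsCompact K) : volume (sh t '' K) = volume K := by
  have h := sh_map t
  rw [one_smul] at h
  conv_lhs => rw [← h]
  rw [Measure.map_apply (sh_cont t).measurable (hK.image (sh_cont t)).measurableSet,
    preimage_image_eq _ (sh_inj t)]

lemma sh_J (t : ℝ) (K : Set E2) :
    Jf (sh t '' K) = ∫ x in cube K, (Dt (fun i => sh t (x i)) / 2) ^ 2 := by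
  have := change_var (sh t) (sh_cont t) (sh_inj t) 1 (sh_map t) (fun x => (Dt x / 2) ^ 2) K
  simpa [Jf] using this

def D1 (x : Fin 3 → E2) : ℝ :=
  crs (x 1 - x 0) ((ll (x 2) - ll (x 0)) • !₂[1, -1]) + crs ((ll (x 1) - ll (x 0)) • !₂[1, -1]) (x 2 - x 0)

lemma sh_Dt (t : ℝ) (x : Fin 3 → E2) : Dt (fun i => sh t (x i)) = Dt x + t * D1 x := by
  simp only [Dt, D1, crs, PiLp.sub_apply, sh_0, sh_1, PiLp.smul_apply, smul_eq_mul]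
  simp
  ring

lemma J_convex {K : Set E2} (hK : IsCompact K) (α β t1 t2 : ℝ) (hα : 0 ≤ α) (hβ : 0 ≤ β)
    (hab : α + β = 1) (h0 : α * t1 + β * t2 = 0) :
    Jf K ≤ α * Jf (sh t1 '' K) + β * Jf (sh t2 '' K) := by
  have hc : ∀ t, Continuous (fun x : Fin 3 → E2 => (Dt (fun i => sh t (x i)) / 2) ^ 2) := by
    intro t
    have h2 : Continuous (fun (x : Fin 3 → E2) (i : Fin 3) => sh t (x i)) :=
      continuous_pi fun i => (sh_cont t).comp (continuous_apply i)
    exact ((cont_Dt.comp h2).div_const 2).pow 2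
  rw [sh_J, sh_J, ← integral_const_mul, ← integral_const_mul, ← integral_add]
  · apply integral_mono
    · exact intOn hK cont_DtSq
    · exact ((intOn hK (hc t1)).const_mul α).add ((intOn hK (hc t2)).const_mul β)
    · intro x
      simp only [sh_Dt]
      have hb : β = 1 - α := by linarith
      subst hb
      have e : Dt x = α * (Dt x + t1 * D1 x) + (1 - α) * (Dt x + t2 * D1 x) := by
        linear_combination - D1 x * h0
      have gen : ∀ d p r : ℝ, d = α * p + (1 - α) * r →
          (d / 2) ^ 2 ≤ α * (p / 2) ^ 2 + (1 - α) * (r / 2) ^ 2 := by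
        intro d p r h
        subst h
        nlinarith [mul_nonneg (mul_nonneg hα hβ) (sq_nonneg (p - r))]
      exact gen _ _ _ e
  · exact (intOn hK (hc t1)).const_mul α
  · exact (intOn hK (hc t2)).const_mul β

def va (a : ℝ) : E2 := !₂[a, -a]
@[simp] lemma va_0 (a : ℝ) : va a 0 = a := by simp [va]
@[simp] lemma va_1 (a : ℝ) : va a 1 = -a := by simp [va]

def HH (R : Set E2) (a : ℝ) : Set E2 := convexHull ℝ (insert (va a) (insert e0 (insert e1 R)))

lemma seg_mem (z0 : E2) (h0 : 0 ≤ z0 0) (h1 : 0 ≤ z0 1) (hs : z0 0 + z0 1 = 1) :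
    z0 ∈ segment ℝ e0 e1 := by
  refine ⟨z0 0, z0 1, h0, h1, hs, ?_⟩
  ext i; fin_cases i <;> simp

lemma sh_sub (R : Set E2) (a b : ℝ)
    (hR : ∀ q ∈ R, 1 ≤ q 0 + q 1 ∧ a * (q 0 + q 1 - 1) ≤ q 1 ∧ - a * (q 0 + q 1 - 1) ≤ q 0) :
    sh (b - a) '' HH R a ⊆ HH R b := by
  set Q := convexHull ℝ (insert e0 (insert e1 R)) with hQ
  have hQc : Convex ℝ Q := convex_convexHull _ _
  have hQv : ∀ q ∈ Q, 1 ≤ q 0 + q 1 ∧ a * (q 0 + q 1 - 1) ≤ q 1 ∧ - a * (q 0 + q 1 - 1) ≤ q 0 := by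
    have : Q ⊆ {q : E2 | 1 ≤ q 0 + q 1 ∧ a * (q 0 + q 1 - 1) ≤ q 1 ∧ - a * (q 0 + q 1 - 1) ≤ q 0} := by
      apply convexHull_min
      · rintro q (rfl | rfl | hq)
        · simp
        · simp
        · exact hR q hq
      · intro x hx y hy r s hr hs hrs
        obtain ⟨x1, x2, x3⟩ := hx
        obtain ⟨y1, y2, y3⟩ := hy
        have hs' : s = 1 - r := by linarith
        subst hs'
        refine ⟨?_, ?_, ?_⟩ <;> simp only [PiLp.add_apply, PiLp.smul_apply, smul_eq_mul] <;>
          [have := mul_le_mul_of_nonneg_left x1 hr; have := mul_le_mul_of_nonneg_left x2 hr;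
            have := mul_le_mul_of_nonneg_left x3 hr] <;>
          [have := mul_le_mul_of_nonneg_left y1 hs; have := mul_le_mul_of_nonneg_left y2 hs;
            have := mul_le_mul_of_nonneg_left y3 hs] <;> nlinarith
    exact this
  have hQb : Q ⊆ HH R b := convexHull_mono (subset_insert _ _)
  have hHb : Convex ℝ (HH R b) := convex_convexHull _ _
  have hvb : va b ∈ HH R b := subset_convexHull _ _ (mem_insert _ _)
  rintro _ ⟨x, hx, rfl⟩
  rw [HH, convexHull_insert (insert_nonempty _ _), ← hQ, mem_convexJoin] at hx
  obtain ⟨v, hv, q, hq, hx⟩ := hx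
  rw [mem_singleton_iff] at hv
  subst hv
  obtain ⟨q1, q2, q3⟩ := hQv q hq
  rw [segment_eq_image] at hx
  obtain ⟨θ, ⟨hθ0, hθ1⟩, rfl⟩ := hx
  have hpos : 0 < q 0 + q 1 := by linarith
  set σ := 1 / (q 0 + q 1) with hσ
  have hσm : σ * (q 0 + q 1) = 1 := by rw [hσ]; field_simp
  have hσ0 : 0 < σ := by positivity
  have hσ1 : σ ≤ 1 := by nlinarith
  set z : E2 := (1 - σ) • va a + σ • q with hz
  have hz0 : z 0 = (1 - σ) * a + σ * q 0 := by simp [hz]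
  have hz1 : z 1 = - (1 - σ) * a + σ * q 1 := by simp [hz]; ring
  have hzs : z ∈ segment ℝ e0 e1 := by
    apply seg_mem
    · rw [hz0]
      have := mul_le_mul_of_nonneg_left q3 hσ0.le
      have e : σ * (-a * (q 0 + q 1 - 1)) = -a * (1 - σ) := by linear_combination (-a) * hσm
      linarith
    · rw [hz1]
      have := mul_le_mul_of_nonneg_left q2 hσ0.le
      have e : σ * (a * (q 0 + q 1 - 1)) = a * (1 - σ) := by linear_combination a * hσm
      linarith
    · rw [hz0, hz1]; linarith
  have hzQ : z ∈ Q := hQc.segment_subset (subset_convexHull _ _ (by simp))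
      (subset_convexHull _ _ (by simp)) hzs
  rcases le_or_gt σ θ with h | h
  · -- beyond the line
    have hl : ll ((1 - θ) • va a + θ • q) = 0 := by
      apply max_eq_right
      simp
      nlinarith
    have hsx : sh (b - a) ((1 - θ) • va a + θ • q) = (1 - θ) • va a + θ • q := by
      simp [sh, hl]
    rw [hsx]
    apply hQb
    rcases eq_or_lt_of_le hσ1 with h1 | h1
    · have : θ = 1 := by linarith
      simpa [this] using hq
    · have h1' : 1 - σ ≠ 0 := by linarith
      have : (1 - θ) • va a + θ • q = ((1 - θ) / (1 - σ)) • z + ((θ - σ) / (1 - σ)) • q := by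
        rw [hz]
        ext i
        simp only [PiLp.add_apply, PiLp.smul_apply, smul_eq_mul]
        field_simp
        ring
      rw [this]
      apply hQc hzQ hq
      · apply div_nonneg <;> linarith
      · apply div_nonneg <;> linarith
      · field_simp; ring
  · have hl : ll ((1 - θ) • va a + θ • q) = 1 - θ / σ := by
      rw [ll, max_eq_left]
      · simp [hσ]; ring
      · simp
        nlinarith
    have hsx : sh (b - a) ((1 - θ) • va a + θ • q) = (1 - θ / σ) • va b + (θ / σ) • z := by
      ext i; fin_cases i
      · simp only [Fin.zero_eta, sh_0, hl]
        simp [hz0]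
        field_simp
        ring
      · simp only [Fin.mk_one, sh_1, hl]
        simp [hz1]
        field_simp
        ring
    rw [hsx]
    apply hHb hvb (hQb hzQ)
    · rw [sub_nonneg, div_le_one hσ0]; exact h.le
    · positivity
    · ring

lemma HH_sh (R : Set E2) (a : ℝ)
    (hR : ∀ q ∈ R, 0 ≤ q 0 ∧ 0 ≤ q 1 ∧ 1 < q 0 + q 1)
    (hR' : ∀ q ∈ R, a * (q 0 + q 1 - 1) ≤ q 1 ∧ - a * (q 0 + q 1 - 1) ≤ q 0) :
    sh a '' HH R 0 = HH R a := by
  apply Subset.antisymm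
  · have := sh_sub R 0 a (fun q hq => ⟨(hR q hq).2.2.le, by simpa using (hR q hq).2.1,
      by simpa using (hR q hq).1⟩)
    simpa using this
  · have h := sh_sub R a 0 (fun q hq => ⟨(hR q hq).2.2.le, (hR' q hq).1, (hR' q hq).2⟩)
    intro x hx
    refine ⟨sh (0 - a) x, h ⟨x, hx, rfl⟩, ?_⟩
    rw [sh_sh]; simp [sh_zero]

lemma va_zero : va 0 = 0 := by
  ext i; fin_cases i <;> simp

lemma hull_drop {A B : Set E2} (h1 : B ⊆ A) (h2 : A ⊆ convexHull ℝ B) :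
    convexHull ℝ A = convexHull ℝ B :=
  Subset.antisymm (convexHull_min h2 (convex_convexHull _ _)) (convexHull_mono h1)

lemma step (R : Finset E2) (hne : R.Nonempty) (hR : ∀ q ∈ R, 0 ≤ q 0 ∧ 0 ≤ q 1 ∧ 1 < q 0 + q 1)
    (IH : ∀ S : Finset E2, S.card ≤ R.card + 2 → Good (convexHull ℝ (S : Set E2))) :
    Good (HH R 0) := by
  classical
  have hKc : IsCompact (HH R 0) := by
    apply Set.Finite.isCompact_convexHull
    simp
  have good : ∀ a : ℝ, (∀ q ∈ R, a * (q 0 + q 1 - 1) ≤ q 1 ∧ - a * (q 0 + q 1 - 1) ≤ q 0) →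
      Good (HH R a) → Jf (sh a '' HH R 0) ≤ (volume (HH R 0)).toReal ^ 5 / 72 := by
    intro a ha hg
    rw [← sh_vol a hKc, HH_sh (R : Set E2) a hR ha]
    exact hg
  obtain ⟨q, hq, hqm⟩ := R.exists_min_image (fun q => q 1 / (q 0 + q 1 - 1)) hne
  obtain ⟨p, hp, hpm⟩ := R.exists_min_image (fun q => q 0 / (q 0 + q 1 - 1)) hne
  set t2 := q 1 / (q 0 + q 1 - 1) with ht2
  set s1 := p 0 / (p 0 + p 1 - 1) with hs1
  obtain ⟨a1, a2, a3⟩ := hR q hq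
  obtain ⟨b1, b2, b3⟩ := hR p hp
  have ht2' : 0 ≤ t2 := div_nonneg a2 (by linarith)
  have hs1' : 0 ≤ s1 := div_nonneg b1 (by linarith)
  have hq1 : q 1 = t2 * (q 0 + q 1 - 1) := by
    have : q 0 + q 1 - 1 ≠ 0 := by linarith
    rw [ht2]; field_simp
  have hp0 : p 0 = s1 * (p 0 + p 1 - 1) := by
    have : p 0 + p 1 - 1 ≠ 0 := by linarith
    rw [hs1]; field_simp
  have g2 : Jf (sh t2 '' HH R 0) ≤ (volume (HH R 0)).toReal ^ 5 / 72 := by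
    apply good
    · intro r hr
      obtain ⟨c1, c2, c3⟩ := hR r hr
      have := hqm r hr
      rw [le_div_iff₀ (by linarith)] at this
      refine ⟨this, ?_⟩
      have := mul_nonneg ht2' (by linarith : 0 ≤ r 0 + r 1 - 1)
      linarith
    · have : HH R t2 = convexHull ℝ ((insert (va t2) (insert e1 R) : Finset E2) : Set E2) := by
        apply hull_drop
        · simp only [Finset.coe_insert]
          exact insert_subset_insert (subset_insert _ _)
        · have hsub := subset_convexHull ℝ ((insert (va t2) (insert e1 R) : Finset E2) : Set E2)
          simp only [Finset.coe_insert] at hsub ⊢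
          rintro x (rfl | rfl | hx)
          · exact hsub (by simp)
          · have hseg : e0 ∈ segment ℝ (va t2) q := by
              refine ⟨1 - 1 / (q 0 + q 1), 1 / (q 0 + q 1), ?_, by positivity, by ring, ?_⟩
              · rw [sub_nonneg, div_le_one (by linarith)]; exact a3.le
              · have hpos : q 0 + q 1 ≠ 0 := by linarith
                ext i; fin_cases i
                · simp; field_simp; linarith
                · simp; field_simp; linarith
            exact (convex_convexHull ℝ _).segment_subset (hsub (by simp)) (hsub (by simp [hq])) hseg
          · exact hsub (by right; exact hx)
      rw [this]
      apply IH
      exact (Finset.card_insert_le _ _).trans (by have := Finset.card_insert_le e1 R; omega)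
  have g1 : Jf (sh (-s1) '' HH R 0) ≤ (volume (HH R 0)).toReal ^ 5 / 72 := by
    apply good
    · intro r hr
      obtain ⟨c1, c2, c3⟩ := hR r hr
      have := hpm r hr
      rw [le_div_iff₀ (by linarith)] at this
      have := mul_nonneg hs1' (by linarith : 0 ≤ r 0 + r 1 - 1)
      refine ⟨by linarith, by linarith⟩
    · have : HH R (-s1) = convexHull ℝ ((insert (va (-s1)) (insert e0 R) : Finset E2) : Set E2) := by
        apply hull_drop
        · simp only [Finset.coe_insert]
          exact insert_subset_insert (insert_subset_insert (subset_insert _ _))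
        · have hsub := subset_convexHull ℝ ((insert (va (-s1)) (insert e0 R) : Finset E2) : Set E2)
          simp only [Finset.coe_insert] at hsub ⊢
          rintro x (rfl | rfl | rfl | hx)
          · exact hsub (by simp)
          · exact hsub (by simp)
          · have hseg : e1 ∈ segment ℝ (va (-s1)) p := by
              refine ⟨1 - 1 / (p 0 + p 1), 1 / (p 0 + p 1), ?_, by positivity, by ring, ?_⟩
              · rw [sub_nonneg, div_le_one (by linarith)]; exact b3.le
              · have hpos : p 0 + p 1 ≠ 0 := by linarith
                ext i; fin_cases i
                · simp; field_simp; linarith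
                · simp; field_simp; linarith
            exact (convex_convexHull ℝ _).segment_subset (hsub (by simp)) (hsub (by simp [hp])) hseg
          · exact hsub (by right; right; exact hx)
      rw [this]
      apply IH
      exact (Finset.card_insert_le _ _).trans (by have := Finset.card_insert_le e0 R; omega)
  by_cases hz : s1 + t2 = 0
  · have : t2 = 0 := by linarith
    have h := J_convex hKc 0 1 0 t2 le_rfl zero_le_one (by ring) (by rw [this]; ring)
    unfold Good
    linarith
  · have hp' : 0 < s1 + t2 := lt_of_le_of_ne (by linarith) (Ne.symm hz)
    have h := J_convex hKc (t2 / (s1 + t2)) (s1 / (s1 + t2)) (-s1) t2 (by positivity) (by positivity)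
      (by field_simp; ring) (by field_simp; ring)
    have i1 := mul_le_mul_of_nonneg_left g1 (by positivity : 0 ≤ t2 / (s1 + t2))
    have i2 := mul_le_mul_of_nonneg_left g2 (by positivity : 0 ≤ s1 / (s1 + t2))
    have e : t2 / (s1 + t2) + s1 / (s1 + t2) = 1 := by field_simp; ring
    unfold Good
    calc _ ≤ _ := h
      _ ≤ _ := add_le_add i1 i2
      _ = _ := by rw [← add_mul, e, one_mul]

lemma collinear_good (S : Set E2) (n0 n1 c : ℝ) (hn : n0 ≠ 0 ∨ n1 ≠ 0)
    (h : ∀ q ∈ S, n0 * q 0 + n1 * q 1 = c) : Good (convexHull ℝ S) := by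
  have hsub : convexHull ℝ S ⊆ {q : E2 | n0 * q 0 + n1 * q 1 = c} := by
    apply convexHull_min h
    intro x hx y hy r s hr hs hrs
    change n0 * x 0 + n1 * x 1 = c at hx
    change n0 * y 0 + n1 * y 1 = c at hy
    change n0 * (r * x 0 + s * y 0) + n1 * (r * x 1 + s * y 1) = c
    linear_combination r * hx + s * hy + c * hrs
  have h0 : Jf (convexHull ℝ S) = 0 := by
    apply setIntegral_eq_zero_of_forall_eq_zero
    intro x hx
    have h0 : n0 * x 0 0 + n1 * x 0 1 = c := hsub (hx 0)
    have h1 : n0 * x 1 0 + n1 * x 1 1 = c := hsub (hx 1)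
    have h2 : n0 * x 2 0 + n1 * x 2 1 = c := hsub (hx 2)
    have : Dt x = 0 := by
      simp only [Dt, crs, PiLp.sub_apply]
      rcases hn with hn | hn
      · apply mul_left_cancel₀ hn
        linear_combination (x 2 1 - x 0 1) * (h1 - h0) - (x 1 1 - x 0 1) * (h2 - h0)
      · apply mul_left_cancel₀ hn
        linear_combination (x 1 0 - x 0 0) * (h2 - h0) - (x 2 0 - x 0 0) * (h1 - h0)
    simp [this]
  unfold Good
  rw [h0]
  positivity

lemma poly_good : ∀ n : ℕ, ∀ S : Finset E2, S.card ≤ n → Good (convexHull ℝ (S : Set E2)) := by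
  classical
  intro n
  induction n with
  | zero =>
    intro S hS
    have : S = ∅ := Finset.card_eq_zero.mp (by omega)
    subst this
    exact collinear_good _ 1 0 0 (by norm_num) (by simp)
  | succ n ih =>
    intro S hS
    by_cases hex : ∃ s ∈ S, s ∈ convexHull ℝ ((S.erase s : Finset E2) : Set E2)
    · obtain ⟨s, hs, hs'⟩ := hex
      have : convexHull ℝ (S : Set E2) = convexHull ℝ ((S.erase s : Finset E2) : Set E2) := by
        apply hull_drop
        · exact_mod_cast Finset.erase_subset _ _
        · intro x hx
          by_cases hxs : x = s
          · rw [hxs]; exact hs'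
          · exact subset_convexHull _ _ (by simpa [hxs] using hx)
      rw [this]
      apply ih
      have := Finset.card_erase_of_mem hs
      omega
    push Not at hex
    rcases S.eq_empty_or_nonempty with rfl | ⟨v, hv⟩
    · exact collinear_good _ 1 0 0 (by norm_num) (by simp)
    rcases (S.erase v).eq_empty_or_nonempty with hempty | hne
    · refine collinear_good _ 1 0 (v 0) (by norm_num) ?_
      intro q hq
      have : q = v := by
        by_contra hqv
        have : q ∈ S.erase v := Finset.mem_erase.mpr ⟨hqv, hq⟩
        simp [hempty] at this
      simp [this]
    obtain ⟨f, c, hfv, hf⟩ := geometric_hahn_banach_point_closed (convex_convexHull ℝ _)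
      ((Finset.finite_toSet (S.erase v)).isCompact_convexHull ℝ).isClosed (hex v hv)
    have hf' : ∀ q ∈ S.erase v, 0 < f (q - v) := by
      intro q hq
      have := hf q (subset_convexHull _ _ hq)
      rw [map_sub]; linarith
    set n0 := f e0 with hn0
    set n1 := f e1 with hn1
    have hfx : ∀ x : E2, f x = n0 * x 0 + n1 * x 1 := by
      intro x
      have : x = x 0 • e0 + x 1 • e1 := by ext i; fin_cases i <;> simp
      conv_lhs => rw [this]
      rw [map_add, map_smul, map_smul, smul_eq_mul, smul_eq_mul]; ring
    let k : E2 → ℝ := fun x => n0 * x 1 - n1 * x 0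
    have hcr : ∀ x y : E2, (n0 ^ 2 + n1 ^ 2) * crs x y = f x * k y - f y * k x := by
      intro x y
      rw [hfx, hfx]; simp only [crs, k]; ring
    have hnp : 0 < n0 ^ 2 + n1 ^ 2 := by
      obtain ⟨q, hq⟩ := hne
      have h1 := hf' q hq
      rw [hfx] at h1
      by_contra hcon
      have z0 : n0 = 0 := by nlinarith [sq_nonneg n0, sq_nonneg n1]
      have z1 : n1 = 0 := by nlinarith [sq_nonneg n0, sq_nonneg n1]
      rw [z0, z1] at h1
      simp at h1
    obtain ⟨u, hu, hum⟩ := (S.erase v).exists_min_image (fun q => k (q - v) / f (q - v)) hne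
    obtain ⟨w, hw, hwm⟩ := (S.erase v).exists_max_image (fun q => k (q - v) / f (q - v)) hne
    have hu' : ∀ q ∈ S.erase v, 0 ≤ crs (u - v) (q - v) := by
      intro q hq
      have := hum q hq
      rw [div_le_div_iff₀ (hf' u hu) (hf' q hq)] at this
      have h2 := hcr (u - v) (q - v)
      by_contra hcon
      nlinarith
    have hw' : ∀ q ∈ S.erase v, 0 ≤ crs (q - v) (w - v) := by
      intro q hq
      have := hwm q hq
      rw [div_le_div_iff₀ (hf' q hq) (hf' w hw)] at this
      have h2 := hcr (q - v) (w - v)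
      by_contra hcon
      nlinarith
    rcases (hu' w hw).eq_or_lt with hz | hpos
    · -- everything on one line
      have hall : ∀ q ∈ S.erase v, crs (u - v) (q - v) = 0 := by
        intro q hq
        have h1 := hcr (u - v) (q - v)
        have h2 := hcr (u - v) (w - v)
        have h3 := hcr (q - v) (w - v)
        rw [← hz] at h2
        have fu := hf' u hu
        have fq := hf' q hq
        have fw := hf' w hw
        have e : f (w - v) * crs (u - v) (q - v) = - (f (u - v) * crs (q - v) (w - v)) := by
          apply mul_left_cancel₀ hnp.ne'
          linear_combination f (w - v) * h1 + f (u - v) * h3 - f (q - v) * h2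
        have := mul_nonneg fu.le (hw' q hq)
        have := hu' q hq
        by_contra hcon
        have : 0 < crs (u - v) (q - v) := lt_of_le_of_ne this (Ne.symm hcon)
        have := mul_pos fw this
        linarith
      refine collinear_good _ (-(u - v) 1) ((u - v) 0) (-(u - v) 1 * v 0 + (u - v) 0 * v 1) ?_ ?_
      · by_contra hcon
        push Not at hcon
        have fu := hf' u hu
        rw [hfx, neg_eq_zero.mp hcon.1, hcon.2] at fu
        simp at fu
      · intro q hq
        by_cases hqv : q = v
        · rw [hqv]
        · have := hall q (Finset.mem_erase.mpr ⟨hqv, hq⟩)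
          unfold crs at this
          simp only [PiLp.sub_apply] at this ⊢
          linear_combination this
    · set a := u - v with ha
      set b := w - v with hb
      have hab : crs a b ≠ 0 := hpos.ne'
      let co : E2 → E2 := fun y => !₂[crs (y - v) b / crs a b, crs a (y - v) / crs a b]
      have hco : ∀ y, aff v a b (co y) = y := aff_surj v a b hab
      have huv : u ≠ v := (Finset.mem_erase.mp hu).1
      have hwv : w ≠ v := (Finset.mem_erase.mp hw).1
      have huw : u ≠ w := by
        intro h
        apply hab
        rw [ha, hb, h]; unfold crs; ring
      have A0 : aff v a b 0 = v := by simp [aff_apply]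
      have A1 : aff v a b e0 = u := by simp [aff_apply, ha]
      have A2 : aff v a b e1 = w := by simp [aff_apply, hb]
      let S' := ((S.erase v).erase u).erase w
      have hS' : S'.card + 3 = S.card := by
        have c1 := Finset.card_erase_add_one hv
        have c2 := Finset.card_erase_add_one hu
        have c3 := Finset.card_erase_add_one (Finset.mem_erase.mpr ⟨huw.symm, hw⟩)
        simp only [S']
        omega
      have hSset : (S : Set E2) = insert v (insert u (insert w (S' : Set E2))) := by
        ext x
        simp only [S', Finset.coe_erase, mem_insert_iff, mem_sdiff, mem_singleton_iff, Finset.mem_coe]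
        constructor
        · intro hx; tauto
        · rintro (rfl | rfl | rfl | hx)
          · exact hv
          · exact (Finset.mem_erase.mp hu).2
          · exact (Finset.mem_erase.mp hw).2
          · exact hx.1.1.1
      let R := S'.image co
      have hRS : aff v a b '' (R : Set E2) = S' := by
        simp only [R, Finset.coe_image, ← image_comp]
        have : (aff v a b) ∘ co = id := funext hco
        rw [this, image_id]
      have hSH : convexHull ℝ (S : Set E2) = aff v a b '' HH R 0 := by
        rw [HH, va_zero, AffineMap.image_convexHull, image_insert_eq, image_insert_eq, image_insert_eq,
          A0, A1, A2, hRS, hSset]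
      rw [hSH]
      apply aff_Good v a b hab
      have hRc : R.card ≤ S'.card := Finset.card_image_le
      rcases R.eq_empty_or_nonempty with hRe | hRne
      · rw [hRe]
        have : HH ((∅ : Finset E2) : Set E2) 0 = T0 := by
          rw [HH, va_zero, ← T0_hull]; simp
        rw [this]
        exact T0_eq.le
      · apply step R hRne
        · intro r hr
          obtain ⟨q, hq, rfl⟩ := Finset.mem_image.mp hr
          have hq0 := Finset.mem_erase.mp hq
          have hq1 := Finset.mem_erase.mp hq0.2
          have hq2 := Finset.mem_erase.mp hq1.2
          have r0 : 0 ≤ co q 0 := by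
            simp only [co]; simp; exact div_nonneg (hw' q hq1.2) hpos.le
          have r1 : 0 ≤ co q 1 := by
            simp only [co]; simp; exact div_nonneg (hu' q hq1.2) hpos.le
          refine ⟨r0, r1, ?_⟩
          by_contra hcon
          push Not at hcon
          have hT : co q ∈ T0 := ⟨r0, r1, hcon⟩
          apply hex q hq2.2
          have h1 : q ∈ aff v a b '' T0 := ⟨co q, hT, hco q⟩
          rw [← T0_hull, AffineMap.image_convexHull, image_insert_eq, image_insert_eq, image_singleton,
            A0, A1, A2] at h1
          refine convexHull_mono ?_ h1
          rintro x (rfl | rfl | rfl)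
          · simpa [hv] using hq2.1.symm
          · simpa using ⟨(Finset.mem_erase.mp hu).2, hq1.1.symm⟩
          · simpa using ⟨(Finset.mem_erase.mp hw).2, hq0.1.symm⟩
        · intro S1 hS1
          apply ih
          omega

lemma body_good (K : Set E2) (hK : IsCompact K) (hKc : Convex ℝ K) (hne : K.Nonempty) : Good K := by
  classical
  obtain ⟨D, hDK, hDc, hDd⟩ := TopologicalSpace.IsSeparable.exists_countable_dense_subset
    (s := K) (TopologicalSpace.IsSeparable.of_separableSpace K)
  have hDne : D.Nonempty := by
    by_contra h
    rw [not_nonempty_iff_eq_empty] at h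
    subst h
    simp at hDd
    exact hne.ne_empty hDd
  obtain ⟨d, hd⟩ := hDc.exists_eq_range hDne
  let P : ℕ → Set E2 := fun n => convexHull ℝ (((Finset.range n).image d : Finset E2) : Set E2)
  have hPm : Monotone P := by
    intro m n hmn
    apply convexHull_mono
    simp only [Finset.coe_image]
    apply image_mono
    simpa using hmn
  have hPc : ∀ n, IsCompact (P n) := fun n => (Finset.finite_toSet _).isCompact_convexHull ℝ
  set U := ⋃ n, P n with hU
  have hUK : U ⊆ K := by
    apply iUnion_subset
    intro n
    apply convexHull_min _ hKc
    simp only [Finset.coe_image]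
    rintro _ ⟨i, _, rfl⟩
    exact hDK (hd ▸ mem_range_self i)
  have hUc : Convex ℝ U := (hPm.directed_le).convex_iUnion (fun n => convex_convexHull _ _)
  have hDU : D ⊆ U := by
    rw [hd]
    rintro _ ⟨i, rfl⟩
    refine mem_iUnion.mpr ⟨i + 1, subset_convexHull _ _ ?_⟩
    simp only [Finset.coe_image]
    exact ⟨i, by simp, rfl⟩
  have hKU : K ⊆ closure U := hDd.trans (closure_mono hDU)
  have hnull : volume (K \ U) = 0 := by
    apply measure_mono_null _ (hUc.addHaar_frontier volume)
    intro x hx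
    exact ⟨hKU hx.1, fun h => hx.2 (interior_subset h)⟩
  have hae : U =ᵐ[volume] K :=
    (ae_le_set.mpr (by rw [sdiff_eq_empty.mpr hUK]; simp)).antisymm (ae_le_set.mpr hnull)
  have hcube : (⋃ n, cube (P n)) = cube U := by
    apply Subset.antisymm
    · exact iUnion_subset fun n => cube_mono (subset_iUnion P n)
    · intro x hx
      have hx' : ∀ i, ∃ n, x i ∈ P n := fun i => mem_iUnion.mp (hx i)
      choose N hN using hx'
      refine mem_iUnion.mpr ⟨Finset.univ.sup N, fun i => ?_⟩
      exact hPm (Finset.le_sup (Finset.mem_univ i)) (hN i)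
  have hJ : Filter.Tendsto (fun n => Jf (P n)) Filter.atTop (nhds (Jf K)) := by
    have h1 := tendsto_setIntegral_of_monotone (μ := volume) (f := fun x : Fin 3 → E2 => (Dt x / 2) ^ 2)
      (s := fun n => cube (P n)) (fun n => (cube_compact (hPc n)).measurableSet)
      (fun m n hmn => cube_mono (hPm hmn))
      (by rw [hcube]; exact (intOn hK cont_DtSq).mono_set (cube_mono hUK))
    rw [hcube] at h1
    have h2 : cube U =ᵐ[volume] cube K := by
      rw [cube_eq, cube_eq, volume_pi]
      exact Measure.ae_eq_set_pi (fun i _ => hae)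
    rw [setIntegral_congr_set h2] at h1
    exact h1
  have hV : Filter.Tendsto (fun n => (volume (P n)).toReal) Filter.atTop (nhds (volume K).toReal) := by
    have h1 := tendsto_measure_iUnion_atTop (μ := volume) hPm
    rw [← hU, measure_congr hae] at h1
    exact (ENNReal.tendsto_toReal hK.measure_lt_top.ne).comp h1
  exact le_of_tendsto_of_tendsto' hJ ((hV.pow 5).div_const 72) (fun n => poly_good _ _ le_rfl)

/-- For every convex body `K ⊆ ℝ²` one has `𝔼 U_{K,3}² ≤ 1/72`, with equality when `K` is
a triangle.  Equivalently, the isotropic constant `L_K`, given by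
`L_K² = (2! 𝔼 U_{K,3}² / 3)^{1/2}` for `K` with centroid at the origin, satisfies
`L_K ≤ L_Δ = 108^{-1/4}`. -/
theorem momentU_sq_le_one_div_seventytwo
    (K : Set (EuclideanSpace ℝ (Fin 2))) (hK : IsConvexBody K) :
    momentU 2 3 K 2 ≤ 1 / 72 ∧
      ∀ a b c : EuclideanSpace ℝ (Fin 2), AffineIndependent ℝ ![a, b, c] →
        momentU 2 3 (convexHull ℝ {a, b, c}) 2 = 1 / 72 := by
  refine ⟨?_, fun a b c h => tri_eq a b c h⟩
  obtain ⟨h1, h2, h3⟩ := hK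
  have hg := body_good K h1 h2 (h3.mono interior_subset)
  have hv : 0 < (volume K).toReal :=
    ENNReal.toReal_pos (Measure.measure_pos_of_nonempty_interior _ h3).ne' h1.measure_lt_top.ne
  rw [momentU_eq, div_le_iff₀ (by positivity)]
  unfold Good at hg
  linarith
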